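/- Let w ∈ K with f(w) ≠ 0. Then the translated polynomial f(x+w) is NP-regular if and only if every proper cluster s ∈ Σ_f has w as a rational centre and every proper cluster s ∈ Σ_f with |s| > |ρ_s|_p satisfies d_s = ρ_s. -/

import Mathlib

open Polynomial
open scoped Classical

namespace ClusterPicture

variable {K Kbar : Type*} [Field K] [Field Kbar] [Algebra K Kbar]

lemma zero_lt_top' : (0 : WithTop ℚ) < ⊤ := by
  simp

lemma withTop_add_pos {a b : WithTop ℚ} (ha : 0 ≤ a) (hb : 0 < b) : 0 < a + b := by
  rcases eq_or_ne a ⊤ with h | h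
  · subst h; rw [top_add]; exact zero_lt_top'
  · lift a to ℚ using h
    rcases eq_or_ne b ⊤ with h' | h'
    · subst h'; rw [add_top]; exact zero_lt_top'
    · lift b to ℚ using h'
      have ha' : (0 : ℚ) ≤ a := by exact_mod_cast ha
      have hb' : (0 : ℚ) < b := by exact_mod_cast hb
      exact_mod_cast add_pos_of_nonneg_of_pos ha' hb'

/-- The setting of the paper: `K` is a complete discretely valued field, with valuation `v`
normalised so that `v(K^×) = ℤ`, `Kbar` is an algebraic closure of `K`, and `v` is (the unique)
extension of the valuation to a `ℚ ∪ {∞}`-valued valuation on `Kbar`. -/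
structure Setup (K Kbar : Type*) [Field K] [Field Kbar] [Algebra K Kbar] : Type _ where
  /-- the valuation on the algebraic closure -/
  v : Kbar → WithTop ℚ
  v_top_iff : ∀ x : Kbar, v x = ⊤ ↔ x = 0
  v_one : v 1 = 0
  v_neg : ∀ x : Kbar, v (-x) = v x
  v_mul : ∀ x y : Kbar, v (x * y) = v x + v y
  v_add : ∀ x y : Kbar, min (v x) (v y) ≤ v (x + y)
  /-- the valuation is normalised: nonzero elements of `K` have integer valuation -/
  v_base_int : ∀ x : K, x ≠ 0 → ∃ n : ℤ, v (algebraMap K Kbar x) = ((n : ℚ) : WithTop ℚ)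
  /-- the valuation is surjective onto `ℤ` on `K^×`: there is a uniformiser -/
  exists_uniformiser : ∃ π : K, v (algebraMap K Kbar π) = ((1 : ℚ) : WithTop ℚ)
  /-- `Kbar` is an algebraic closure of `K` -/
  algClosed : IsAlgClosed Kbar
  algebraic : Algebra.IsAlgebraic K Kbar
  /-- `K` is complete with respect to the valuation -/
  complete : ∀ a : ℕ → K,
    (∀ q : ℚ, ∃ N : ℕ, ∀ m, N ≤ m → ∀ n, N ≤ n →
      ((q : ℚ) : WithTop ℚ) ≤ v (algebraMap K Kbar (a m - a n))) →
    ∃ b : K, ∀ q : ℚ, ∃ N : ℕ, ∀ n, N ≤ n →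
      ((q : ℚ) : WithTop ℚ) ≤ v (algebraMap K Kbar (a n - b))

/-- Valuation of an element of the base field `K`. -/
def Setup.vK (S : Setup K Kbar) (x : K) : WithTop ℚ := S.v (algebraMap K Kbar x)

/-- The finite set of roots of `f` in the algebraic closure `Kbar`. -/
noncomputable def rootFinset (f : K[X]) : Finset Kbar :=
  (f.map (algebraMap K Kbar)).roots.toFinset

/-- A cluster for `f`: a nonempty subset of the set of roots of `f` cut out by a `v`-adic disc. -/
def IsCluster (S : Setup K Kbar) (f : K[X]) (s : Finset Kbar) : Prop :=
  s.Nonempty ∧ ∃ (z : Kbar) (δ : ℚ),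
    s = (rootFinset f).filter fun r => ((δ : ℚ) : WithTop ℚ) ≤ S.v (r - z)

/-- The depth `d_s = min_{r,r' ∈ s} v (r - r')` of a cluster. -/
noncomputable def depth (S : Setup K Kbar) (s : Finset Kbar) : WithTop ℚ :=
  s.inf fun r => s.inf fun r' => S.v (r - r')

/-- `min_{r ∈ s} v (r - z)`, for `z ∈ Kbar`. -/
noncomputable def dmin (S : Setup K Kbar) (s : Finset Kbar) (z : Kbar) : WithTop ℚ :=
  s.inf fun r => S.v (r - z)

/-- `min_{r ∈ s} v (r - w)`, for `w ∈ K`. -/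
noncomputable def dminK (S : Setup K Kbar) (s : Finset Kbar) (w : K) : WithTop ℚ :=
  dmin S s (algebraMap K Kbar w)

/-- `w ∈ K` is a rational centre of `s` if it maximises `min_{r ∈ s} v (r - w)`.
For a proper cluster `s` with rational centre `w`, the radius `ρ_s` is `dminK S s w`. -/
def IsRationalCentre (S : Setup K Kbar) (s : Finset Kbar) (w : K) : Prop :=
  ∀ w' : K, dminK S s w' ≤ dminK S s w

/-- A rational cluster: a cluster cut out by a disc with centre in `K`. -/
def IsRationalCluster (S : Setup K Kbar) (f : K[X]) (s : Finset Kbar) : Prop :=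
  s.Nonempty ∧ ∃ (w : K) (δ : ℚ),
    s = (rootFinset f).filter fun r => ((δ : ℚ) : WithTop ℚ) ≤ S.v (r - algebraMap K Kbar w)

/-- A cluster centred at `w ∈ K`. -/
def IsClusterCentredAt (S : Setup K Kbar) (f : K[X]) (w : K) (s : Finset Kbar) : Prop :=
  s.Nonempty ∧ ∃ δ : ℚ,
    s = (rootFinset f).filter fun r => ((δ : ℚ) : WithTop ℚ) ≤ S.v (r - algebraMap K Kbar w)

/-- The cluster picture of `f` is almost rational: every proper cluster `s` with
`|s| > |ρ_s|_p` satisfies `d_s = ρ_s`. -/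
def AlmostRational (S : Setup K Kbar) (f : K[X]) (p : ℕ) : Prop :=
  ∀ s : Finset Kbar, IsCluster S f s → 1 < s.card →
    ∀ (w : K) (ρ : ℚ), IsRationalCentre S s w → dminK S s w = ((ρ : ℚ) : WithTop ℚ) →
      padicNorm p ρ < (s.card : ℚ) → depth S s = ((ρ : ℚ) : WithTop ℚ)

/-- The slope of the `j`-th edge of the polygon with vertices `(i_j, c_j)`. -/
def NPslope {s : ℕ} (i : Fin (s + 1) → ℕ) (c : Fin (s + 1) → ℚ) (j : Fin s) : ℚ :=
  (c j.succ - c j.castSucc) / ((i j.succ : ℚ) - (i j.castSucc : ℚ))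

/-- `(i_0, c_0), …, (i_s, c_s)` are the vertices of the Newton polygon of `f`:
the points `(i_j, c_j)` are among the points `(m, v(a_m))`, the first and last vertices lie
above the trailing and leading coefficients, the slopes of consecutive edges strictly
increase, and every point `(m, v(a_m))` lies on or above (the line spanned by) every edge. -/
structure IsNPVertices (S : Setup K Kbar) (f : K[X]) (s : ℕ)
    (i : Fin (s + 1) → ℕ) (c : Fin (s + 1) → ℚ) : Prop where
  mono : StrictMono i
  first : i 0 = f.natTrailingDegree
  last : i (Fin.last s) = f.natDegree
  vert : ∀ j, S.vK (f.coeff (i j)) = ((c j : ℚ) : WithTop ℚ)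
  slope_mono : StrictMono (NPslope i c)
  support : ∀ (j : Fin s) (m : ℕ) (q : ℚ), S.vK (f.coeff m) = ((q : ℚ) : WithTop ℚ) →
    (c j.succ - c j.castSucc) * ((m : ℚ) - (i j.castSucc : ℚ)) ≤
      (q - c j.castSucc) * ((i j.succ : ℚ) - (i j.castSucc : ℚ))

/-- The valuation ring of `Kbar`. -/
def intRing (S : Setup K Kbar) : Subring Kbar where
  carrier := {x : Kbar | (0 : WithTop ℚ) ≤ S.v x}
  zero_mem' := by
    simp only [Set.mem_setOf_eq, (S.v_top_iff 0).mpr rfl]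
    exact le_top
  one_mem' := by
    simp only [Set.mem_setOf_eq, S.v_one]
    exact le_refl _
  add_mem' := by
    intro a b ha hb
    exact le_trans (le_min ha hb) (S.v_add a b)
  mul_mem' := by
    intro a b ha hb
    simp only [Set.mem_setOf_eq, S.v_mul a b]
    exact add_nonneg ha hb
  neg_mem' := by
    intro a ha
    simpa only [Set.mem_setOf_eq, S.v_neg] using ha

lemma mem_intRing {S : Setup K Kbar} {x : Kbar} :
    x ∈ intRing S ↔ (0 : WithTop ℚ) ≤ S.v x := Iff.rfl

/-- The maximal ideal of the valuation ring of `Kbar`. -/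
def maxIdeal (S : Setup K Kbar) : Ideal (intRing S) where
  carrier := {x : intRing S | (0 : WithTop ℚ) < S.v (x : Kbar)}
  zero_mem' := by
    show (0 : WithTop ℚ) < S.v ((0 : intRing S) : Kbar)
    rw [show ((0 : intRing S) : Kbar) = 0 from rfl, (S.v_top_iff 0).mpr rfl]
    exact zero_lt_top'
  add_mem' := by
    intro a b ha hb
    show (0 : WithTop ℚ) < S.v ((a : Kbar) + (b : Kbar))
    exact lt_of_lt_of_le (lt_min ha hb) (S.v_add _ _)
  smul_mem' := by
    intro c x hx
    show (0 : WithTop ℚ) < S.v ((c : Kbar) * (x : Kbar))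
    rw [S.v_mul]
    exact withTop_add_pos c.2 hx

/-- The residue field of `Kbar`; it is an algebraic closure of the residue field `k` of `K`. -/
abbrev Residue (S : Setup K Kbar) : Type _ := intRing S ⧸ maxIdeal S

/-- Reduction to the residue field (with junk value `0` on non-integral elements). -/
noncomputable def red (S : Setup K Kbar) (x : Kbar) : Residue S :=
  if h : (0 : WithTop ℚ) ≤ S.v x then Ideal.Quotient.mk (maxIdeal S) ⟨x, mem_intRing.mpr h⟩
  else 0

/-- The reduction `f̄|_L` of `f` along the edge `L` of its Newton polygon with endpoints
`(i₁, q₁)` and `(i₂, q₂)`, of slope `ρ = nρ / n` where `n` is the denominator of `ρ`;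
`π` is a uniformiser of `K`.  This is the reduction of `π^{-q₁}·(f|_L)(π^{-nρ}·x)`, where
`f|_L (x) = ∑_j a_{n j + i₁} x^j`. -/
noncomputable def redEdge (S : Setup K Kbar) (π : K) (f : K[X])
    (i₁ i₂ : ℕ) (q₁ nρ : ℤ) (n : ℕ) : Polynomial (Residue S) :=
  ∑ j ∈ Finset.range ((i₂ - i₁) / n + 1),
    Polynomial.C (red S (algebraMap K Kbar (f.coeff (n * j + i₁)) *
      (algebraMap K Kbar π) ^ (-(q₁ + (j : ℤ) * nρ)))) * Polynomial.X ^ j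

/-- `f` is NP-regular (`Δ_v`-regular in dimension 1): for every edge `L` of its Newton
polygon, the reduction `f̄|_L` has no multiple roots in the algebraic closure of the residue
field, i.e. is separable. -/
def NPRegular (S : Setup K Kbar) (π : K) (f : K[X]) : Prop :=
  ∀ (s : ℕ) (i : Fin (s + 1) → ℕ) (c : Fin (s + 1) → ℚ),
    IsNPVertices S f s i c →
    ∀ (j : Fin s) (q₁ nρ : ℤ) (n : ℕ),
      (q₁ : ℚ) = c j.castSucc →
      n = (NPslope i c j).den →
      (nρ : ℚ) = (n : ℚ) * NPslope i c j →
      (redEdge S π f (i j.castSucc) (i j.succ) q₁ nρ n).Separable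

/-- The vertex-index function of the Newton polygon of `f(x+w)`, in terms of the sizes of
the clusters `s_1 ⊂ … ⊂ s_{n+1}` centred at `w`; here `t` is the prescribed first index. -/
def vertIdx {n : ℕ} (t : ℕ) (s : Fin (n + 1) → Finset Kbar) : Fin (n + 2) → ℕ :=
  fun j => Fin.cases (motive := fun _ => ℕ) t (fun j' => (s j').card) j

/-- The vertex-value function of the Newton polygon of `f(x+w)`: the vertex over `|s_j|` has
second coordinate `ε_{s_j} - |s_j|·ρ_{s_j}`; `c0` is the prescribed value at the first vertex. -/
def vertVal {n : ℕ} (c0 : ℚ) (s : Fin (n + 1) → Finset Kbar) (ρ ε : Fin (n + 1) → ℚ) :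
    Fin (n + 2) → ℚ :=
  fun j => Fin.cases (motive := fun _ => ℚ) c0 (fun j' => ε j' - ((s j').card : ℚ) * ρ j') j

/-!
Write `g(x) = f(x + w)`, with roots `β = r - w`, and fix a rational number `ρ` with denominator `n`.
Choose `θ` with `v(θ) = ρ` and `θ ^ n = π ^ (n ρ)`. A suitable multiple of `g(θ x)` reduces to the
product of the `x - red(β/θ)` over the roots with `v(β) ≥ ρ`; its nonzero coefficients mark the
points on the face of slope `-ρ` of the Newton polygon, and since `v` is integral on `K` only
exponents congruent to the initial one mod `n` occur. So this product is, up to a unit and a power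
of `x`, the reduction of `g` along the face evaluated at `x ^ n`. Substituting `x ^ n` multiplies
the multiplicity of every nonzero root by the `p`-part of `n`, which is `max 1 |ρ|_p`, so the
reduction is separable iff each open disc of radius `ρ` around a root of valuation `ρ` contains at
most `max 1 |ρ|_p` roots.

These open discs cut out the clusters `s` with `d_s > min_{r ∈ s} v(r - w) = ρ`. If `w` is not a
rational centre of `s`, this minimum is `v(w' - w)` for some `w' ∈ K`, hence an integer, and the
bound says `|s| ≤ 1`; if `w` is a rational centre then `ρ = ρ_s`, and for proper `s` the bound is
the condition `|s| ≤ |ρ_s|_p`.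
-/

section ExpandedPolynomials

variable {ι A : Type*} [CommRing A] [IsDomain A]

lemma rootMultiplicity_prod_X_sub_C (T : Finset ι) (b : ι → A) (x : A) :
    (∏ i ∈ T, (X - C (b i))).rootMultiplicity x = (T.filter fun i => b i = x).card := by
  have hprod : ∏ i ∈ T, (X - C (b i)) = ((T.val.map b).map fun a => X - C a).prod := by
    rw [Multiset.map_map]; rfl
  rw [← count_roots, hprod, roots_multiset_prod_X_sub_C, Multiset.count_map]
  simp only [eq_comm, Finset.card, Finset.filter_val]

lemma rootMultiplicity_C_mul_X_pow_mul {u b : A} (hu : u ≠ 0) (hb : b ≠ 0) (a : ℕ) (P : A[X]) :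
    (C u * (X ^ a * P)).rootMultiplicity b = P.rootMultiplicity b := by
  rcases eq_or_ne P 0 with rfl | hP
  · simp
  have hX : (X ^ a : A[X]).rootMultiplicity b = 0 := by
    apply rootMultiplicity_eq_zero
    rw [IsRoot, eval_pow, eval_X]
    exact pow_ne_zero a hb
  have hXP : X ^ a * P ≠ 0 := mul_ne_zero (pow_ne_zero a X_ne_zero) hP
  rw [rootMultiplicity_mul (mul_ne_zero (C_ne_zero.mpr hu) hXP), rootMultiplicity_C,
    rootMultiplicity_mul hXP, hX, zero_add, zero_add]

variable {k : Type*} [Field k]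

lemma rootMultiplicity_expand_of_natCast_ne_zero {n : ℕ} (hn : (n : k) ≠ 0) {b : k} (hb : b ≠ 0)
    (h : k[X]) : (expand k n h).rootMultiplicity b = h.rootMultiplicity (b ^ n) := by
  rcases eq_or_ne h 0 with rfl | hh
  · simp
  obtain ⟨q, hq, hdvd⟩ := exists_eq_pow_rootMultiplicity_mul_and_not_dvd h hh (b ^ n)
  have hsep : (X ^ n - C (b ^ n) : k[X]).Separable := separable_X_pow_sub_C _ hn (pow_ne_zero n hb)
  have hbinom : (X ^ n - C (b ^ n) : k[X]).roots.count b = 1 := by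
    rw [count_roots]
    refine le_antisymm (rootMultiplicity_le_one_of_separable hsep b) ?_
    rw [Nat.succ_le_iff, rootMultiplicity_pos hsep.ne_zero]
    simp
  have hfac : expand k n h = (X ^ n - C (b ^ n)) ^ h.rootMultiplicity (b ^ n) * expand k n q := by
    conv_lhs => rw [hq]
    simp only [map_mul, map_pow, map_sub, expand_X, expand_C]
  have hn0 : 0 < n := Nat.pos_of_ne_zero fun h0 => hn (by rw [h0, Nat.cast_zero])
  have hexp : expand k n h ≠ 0 := (expand_eq_zero hn0).not.mpr hh
  have hq0 : (expand k n q).rootMultiplicity b = 0 := by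
    apply rootMultiplicity_eq_zero
    rwa [IsRoot, expand_eval, ← IsRoot, ← dvd_iff_isRoot]
  rw [hfac, rootMultiplicity_mul (hfac ▸ hexp), ← count_roots, roots_pow, Multiset.count_nsmul,
    hbinom, mul_one, hq0, add_zero]

variable (p : ℕ) [Fact p.Prime] [CharP k p] {n : ℕ}

lemma rootMultiplicity_expand_eq_ordProj_mul (hn : n ≠ 0) {b : k} (hb : b ≠ 0) (h : k[X]) :
    (expand k n h).rootMultiplicity b = ordProj[p] n * h.rootMultiplicity (b ^ n) := by
  have hcop : ((ordCompl[p] n : ℕ) : k) ≠ 0 := by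
    rw [Ne, CharP.cast_eq_zero_iff k p]
    exact Nat.not_dvd_ordCompl Fact.out hn
  conv_lhs => rw [← Nat.ordProj_mul_ordCompl_eq_self n p]
  rw [expand_mul, rootMultiplicity_expand_pow,
    rootMultiplicity_expand_of_natCast_ne_zero hcop (pow_ne_zero _ hb), ← pow_mul,
    Nat.ordProj_mul_ordCompl_eq_self]

lemma separable_iff_rootMultiplicity_expand_le [IsAlgClosed k] (hn : n ≠ 0) {h : k[X]}
    (h0 : h.coeff 0 ≠ 0) :
    h.Separable ↔ ∀ b ≠ 0, (expand k n h).rootMultiplicity b ≤ ordProj[p] n := by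
  have hpos : 0 < ordProj[p] n := Nat.ordProj_pos n p
  have hh : h ≠ 0 := fun hz => h0 (by rw [hz, coeff_zero])
  constructor
  · intro hsep b hb
    rw [rootMultiplicity_expand_eq_ordProj_mul p hn hb]
    exact mul_le_of_le_one_right' (rootMultiplicity_le_one_of_separable hsep _)
  · intro hle
    rw [← nodup_roots_iff_of_splits hh (IsAlgClosed.splits h), Multiset.nodup_iff_count_le_one]
    intro a
    rw [count_roots]
    rcases eq_or_ne a 0 with rfl | ha
    · rw [rootMultiplicity_eq_zero (by rwa [IsRoot, ← coeff_zero_eq_eval_zero])]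
      exact zero_le_one
    obtain ⟨b, rfl⟩ := IsAlgClosed.exists_pow_nat_eq a (Nat.pos_of_ne_zero hn)
    have hb := hle b (ne_zero_pow hn ha)
    rw [rootMultiplicity_expand_eq_ordProj_mul p hn (ne_zero_pow hn ha)] at hb
    exact Nat.le_of_mul_le_mul_left (by rwa [mul_one]) hpos

end ExpandedPolynomials

section Valuation

namespace Setup

variable (S : Setup K Kbar)

/-- The valuation of `S`, bundled as a Mathlib additive valuation. -/
noncomputable def addVal : AddValuation Kbar (WithTop ℚ) :=
  AddValuation.of S.v ((S.v_top_iff 0).mpr rfl) S.v_one S.v_add S.v_mul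

lemma addVal_apply (x : Kbar) : S.addVal x = S.v x := rfl

lemma v_zero : S.v 0 = ⊤ := S.addVal.map_zero

variable {S} {x y : Kbar} {q r : ℚ}

lemma ne_zero_of_v_eq_coe (hx : S.v x = (q : WithTop ℚ)) : x ≠ 0 := by
  rw [Ne, ← S.v_top_iff, hx]
  exact WithTop.coe_ne_top

lemma exists_v_eq_coe (hx : x ≠ 0) : ∃ q : ℚ, S.v x = (q : WithTop ℚ) := by
  obtain ⟨q, hq⟩ := WithTop.ne_top_iff_exists.mp ((S.v_top_iff x).not.mpr hx)
  exact ⟨q, hq.symm⟩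

lemma v_mul_eq_coe (hx : S.v x = (q : WithTop ℚ)) (hy : S.v y = (r : WithTop ℚ)) :
    S.v (x * y) = ((q + r : ℚ) : WithTop ℚ) := by
  rw [S.v_mul, hx, hy, WithTop.coe_add]

lemma v_inv_eq_coe (hx : S.v x = (q : WithTop ℚ)) : S.v x⁻¹ = ((-q : ℚ) : WithTop ℚ) := by
  rw [← S.addVal_apply, S.addVal.map_inv, S.addVal_apply, hx]
  rfl

lemma v_pow_eq_coe (hx : S.v x = (q : WithTop ℚ)) (n : ℕ) :
    S.v (x ^ n) = ((n * q : ℚ) : WithTop ℚ) := by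
  rw [← S.addVal_apply, S.addVal.map_pow, S.addVal_apply, hx, ← WithTop.coe_nsmul, nsmul_eq_mul]

lemma v_zpow_eq_coe (hx : S.v x = (q : WithTop ℚ)) (n : ℤ) :
    S.v (x ^ n) = ((n * q : ℚ) : WithTop ℚ) := by
  cases n with
  | ofNat n => simpa using v_pow_eq_coe hx n
  | negSucc n =>
    rw [zpow_negSucc, v_inv_eq_coe (v_pow_eq_coe hx (n + 1)), Int.cast_negSucc, neg_mul]

lemma v_div_nonneg_iff (hy : y ≠ 0) : 0 ≤ S.v (x / y) ↔ S.v y ≤ S.v x := by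
  obtain ⟨r, hr⟩ := exists_v_eq_coe (S := S) hy
  rw [div_eq_mul_inv, S.v_mul, v_inv_eq_coe hr, hr]
  induction S.v x with
  | top => simp
  | coe q => norm_cast; rw [← sub_eq_add_neg, sub_nonneg]

lemma v_div_pos_iff (hy : y ≠ 0) : 0 < S.v (x / y) ↔ S.v y < S.v x := by
  obtain ⟨r, hr⟩ := exists_v_eq_coe (S := S) hy
  rw [div_eq_mul_inv, S.v_mul, v_inv_eq_coe hr, hr]
  induction S.v x with
  | top => simp
  | coe q => norm_cast; rw [← sub_eq_add_neg, sub_pos]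

lemma exists_pow_eq_zpow {π : Kbar} (hπ : S.v π = ((1 : ℚ) : WithTop ℚ)) (ρ : ℚ) :
    ∃ θ : Kbar, θ ^ ρ.den = π ^ ρ.num ∧ S.v θ = (ρ : WithTop ℚ) := by
  have := S.algClosed
  obtain ⟨θ, hθ⟩ := IsAlgClosed.exists_pow_nat_eq (π ^ ρ.num) ρ.den_pos
  have hθ0 : θ ≠ 0 :=
    ne_zero_pow ρ.den_nz (hθ ▸ zpow_ne_zero _ (ne_zero_of_v_eq_coe hπ))
  obtain ⟨q, hq⟩ := exists_v_eq_coe (S := S) hθ0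
  have hv := v_pow_eq_coe hq ρ.den
  rw [hθ, v_zpow_eq_coe hπ, mul_one, WithTop.coe_inj] at hv
  refine ⟨θ, hθ, ?_⟩
  rw [hq, WithTop.coe_inj, ← ρ.num_div_den, hv, mul_div_cancel_left₀]
  exact_mod_cast ρ.den_nz

end Setup

end Valuation

section ResidueField

variable (S : Setup K Kbar)

instance maxIdeal_isMaximal : (maxIdeal S).IsMaximal := by
  rw [Ideal.isMaximal_iff]
  refine ⟨fun h => (h.trans_eq S.v_one).false, fun J x _ hx hxJ => ?_⟩
  have hvx : S.v (x : Kbar) = 0 := le_antisymm (not_lt.mp hx) x.2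
  have hinv : (x : Kbar)⁻¹ ∈ intRing S := (Setup.v_inv_eq_coe (q := 0) hvx).ge
  have hmul : (⟨(x : Kbar)⁻¹, hinv⟩ : intRing S) * x = 1 :=
    Subtype.ext (inv_mul_cancel₀ (Setup.ne_zero_of_v_eq_coe hvx))
  exact hmul ▸ J.mul_mem_left _ hxJ

noncomputable instance : Field (Residue S) := Ideal.Quotient.field (maxIdeal S)

variable {S} {x y : Kbar}

lemma red_coe (x : intRing S) : red S (x : Kbar) = Ideal.Quotient.mk (maxIdeal S) x :=
  dif_pos x.2

lemma red_eq_zero_iff (hx : 0 ≤ S.v x) : red S x = 0 ↔ 0 < S.v x := by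
  lift x to intRing S using hx
  rw [red_coe, Ideal.Quotient.eq_zero_iff_mem]
  rfl

lemma red_sub (hx : 0 ≤ S.v x) (hy : 0 ≤ S.v y) : red S (x - y) = red S x - red S y := by
  lift x to intRing S using hx
  lift y to intRing S using hy
  rw [← AddSubgroupClass.coe_sub, red_coe, red_coe, red_coe, map_sub]

lemma red_mul (hx : 0 ≤ S.v x) (hy : 0 ≤ S.v y) : red S (x * y) = red S x * red S y := by
  lift x to intRing S using hx
  lift y to intRing S using hy
  rw [← Subring.coe_mul, red_coe, red_coe, red_coe, map_mul]

lemma red_eq_red_iff (hx : 0 ≤ S.v x) (hy : 0 ≤ S.v y) :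
    red S x = red S y ↔ 0 < S.v (x - y) := by
  rw [← sub_eq_zero, ← red_sub hx hy, red_eq_zero_iff (S.addVal.map_le_sub hx hy)]

lemma red_div_eq_red_div_iff {z : Kbar} (hz : z ≠ 0) (hx : S.v z ≤ S.v x) (hy : S.v z ≤ S.v y) :
    red S (x / z) = red S (y / z) ↔ S.v z < S.v (x - y) := by
  rw [red_eq_red_iff ((Setup.v_div_nonneg_iff hz).mpr hx) ((Setup.v_div_nonneg_iff hz).mpr hy),
    ← sub_div, Setup.v_div_pos_iff hz]

lemma red_div_eq_zero_iff {z : Kbar} (hz : z ≠ 0) (hx : S.v z ≤ S.v x) :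
    red S (x / z) = 0 ↔ S.v z < S.v x := by
  rw [red_eq_zero_iff ((Setup.v_div_nonneg_iff hz).mpr hx), Setup.v_div_pos_iff hz]

lemma Setup.charP_residue {p : ℕ} (hp : p.Prime) (hres : 0 < S.vK (p : K)) :
    CharP (Residue S) p := by
  have hv : 0 < S.v (p : Kbar) := by
    rwa [Setup.vK, map_natCast] at hres
  rw [CharP.charP_iff_prime_eq_zero hp, ← (red_eq_zero_iff hv.le).mpr hv]
  exact (red_coe (p : intRing S)).symm

lemma integers_intRing (S : Setup K Kbar) : S.addVal.toValuation.Integers (intRing S) where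
  hom_inj := Subtype.val_injective
  map_le_one x := x.2
  exists_of_le_one {x} hx := ⟨⟨x, hx⟩, rfl⟩

instance : IsAlgClosed (Residue S) := by
  refine IsAlgClosed.of_exists_root _ fun P hP hirr => ?_
  have := S.algClosed
  obtain ⟨P₀, rfl, hdeg, hP₀⟩ := lifts_and_natDegree_eq_and_monic
    (mem_lifts_of_surjective Ideal.Quotient.mk_surjective P) hP
  have hdeg₀ : (P₀.map (intRing S).subtype).degree ≠ 0 := by
    rw [hP₀.degree_map, degree_eq_natDegree hP₀.ne_zero, hdeg]
    exact_mod_cast hirr.natDegree_pos.ne'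
  obtain ⟨x, hx⟩ := IsAlgClosed.exists_root _ hdeg₀
  have hint : IsIntegral (intRing S) x := ⟨P₀, hP₀, by rwa [← eval_map]⟩
  lift x to intRing S using (integers_intRing S).mem_of_integral hint
  have hroot : P₀.eval x = 0 := by
    have hx' : P₀.eval₂ (intRing S).subtype ((intRing S).subtype x) = 0 := by rwa [← eval_map]
    rw [eval₂_at_apply] at hx'
    exact Subtype.ext hx'
  exact ⟨Ideal.Quotient.mk _ x, by rw [eval_map, eval₂_at_apply, hroot, map_zero]⟩

end ResidueField

section Reduction

variable {S : Setup K Kbar}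

/-- `P` has integral coefficients and `Q` is its reduction to the residue field. -/
def ReducesTo (S : Setup K Kbar) (P : Kbar[X]) (Q : (Residue S)[X]) : Prop :=
  ∃ P₀ : (intRing S)[X],
    P₀.map (intRing S).subtype = P ∧ P₀.map (Ideal.Quotient.mk (maxIdeal S)) = Q

namespace ReducesTo

variable {P : Kbar[X]} {Q : (Residue S)[X]}

lemma prod {ι : Type*} (s : Finset ι) {P : ι → Kbar[X]} {Q : ι → (Residue S)[X]}
    (h : ∀ i, ReducesTo S (P i) (Q i)) : ReducesTo S (∏ i ∈ s, P i) (∏ i ∈ s, Q i) := by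
  choose P₀ hP hQ using h
  exact ⟨∏ i ∈ s, P₀ i, by simp only [Polynomial.map_prod, hP],
    by simp only [Polynomial.map_prod, hQ]⟩

lemma v_coeff_nonneg (h : ReducesTo S P Q) (m : ℕ) : 0 ≤ S.v (P.coeff m) := by
  obtain ⟨P₀, rfl, -⟩ := h
  rw [coeff_map]
  exact (P₀.coeff m).2

lemma red_coeff (h : ReducesTo S P Q) (m : ℕ) : red S (P.coeff m) = Q.coeff m := by
  obtain ⟨P₀, rfl, rfl⟩ := h
  rw [coeff_map, coeff_map]
  exact red_coe (P₀.coeff m)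

lemma X_sub_C {x : Kbar} (hx : 0 ≤ S.v x) : ReducesTo S (X - C x) (X - C (red S x)) := by
  lift x to intRing S using hx
  exact ⟨X - C x, by simp, by simp [red_coe]⟩

lemma one_sub_C_mul_X {x : Kbar} (hx : 0 < S.v x) : ReducesTo S (1 - C x * X) 1 := by
  refine ⟨1 - C ⟨x, hx.le⟩ * X, by simp, ?_⟩
  have hx0 : Ideal.Quotient.mk (maxIdeal S) ⟨x, hx.le⟩ = 0 := Ideal.Quotient.eq_zero_iff_mem.mpr hx
  simp [hx0]

end ReducesTo

lemma exists_reducesTo_linear {θ : Kbar} (hθ : θ ≠ 0) (β : Kbar) :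
    ∃ E ≠ 0, ReducesTo S (C E * (X - C β).comp (C θ * X))
      (if S.v θ ≤ S.v β then X - C (red S (β / θ)) else 1) := by
  simp only [sub_comp, X_comp, C_comp]
  split_ifs with h
  · refine ⟨θ⁻¹, inv_ne_zero hθ, ?_⟩
    convert ReducesTo.X_sub_C ((Setup.v_div_nonneg_iff hθ).mpr h) using 1
    rw [mul_sub, ← mul_assoc, ← C_mul, inv_mul_cancel₀ hθ, C_1, one_mul, ← C_mul, div_eq_inv_mul]
  · have hβ : β ≠ 0 := by
      rintro rfl
      exact h (S.v_zero ▸ le_top)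
    refine ⟨-β⁻¹, neg_ne_zero.mpr (inv_ne_zero hβ), ?_⟩
    convert ReducesTo.one_sub_C_mul_X ((Setup.v_div_pos_iff hβ).mpr (not_le.mp h)) using 1
    rw [C_neg, neg_mul, mul_sub, ← mul_assoc, ← C_mul, ← C_mul, inv_mul_cancel₀ hβ, C_1, neg_sub,
      div_eq_inv_mul]

lemma exists_reducesTo_prod {ι : Type*} (R : Finset ι) (β : ι → Kbar) {c θ : Kbar} (hc : c ≠ 0)
    (hθ : θ ≠ 0) :
    ∃ E ≠ 0, ReducesTo S (C E * (C c * ∏ i ∈ R, (X - C (β i))).comp (C θ * X))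
      (∏ i ∈ R with S.v θ ≤ S.v (β i), (X - C (red S (β i / θ)))) := by
  choose E hE hred using fun i => exists_reducesTo_linear (S := S) hθ (β i)
  refine ⟨(∏ i ∈ R, E i) * c⁻¹,
    mul_ne_zero (Finset.prod_ne_zero_iff.mpr fun i _ => hE i) (inv_ne_zero hc), ?_⟩
  rw [Finset.prod_filter]
  convert ReducesTo.prod R hred using 1
  rw [mul_comp, C_comp, prod_comp, ← mul_assoc, ← C_mul, inv_mul_cancel_right₀ hc,
    Finset.prod_mul_distrib, map_prod C]

end Reduction

section NewtonPolygon

variable {a a' b b' : ℕ} {e e' : ℚ} {S : Setup K Kbar} {g : K[X]} {ρ : ℚ}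

/-- The face of slope `-ρ` of the Newton polygon of `g`: all points `(m, v(a_m))` lie on or above
the line `y = e - ρ x`, and `a` and `b` are the smallest and the largest abscissa of a point on this
line. An edge is a face with `a < b`. -/
structure IsFace (S : Setup K Kbar) (g : K[X]) (ρ e : ℚ) (a b : ℕ) : Prop where
  le : ∀ m : ℕ, ((e - m * ρ : ℚ) : WithTop ℚ) ≤ S.vK (g.coeff m)
  left : S.vK (g.coeff a) = ((e - a * ρ : ℚ) : WithTop ℚ)
  right : S.vK (g.coeff b) = ((e - b * ρ : ℚ) : WithTop ℚ)
  mem_Icc : ∀ m : ℕ, S.vK (g.coeff m) = ((e - m * ρ : ℚ) : WithTop ℚ) → m ∈ Set.Icc a b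

lemma IsFace.height_le (h : IsFace S g ρ e a b) (h' : IsFace S g ρ e' a' b') : e ≤ e' := by
  have hle := h.le a'
  rw [h'.left, WithTop.coe_le_coe] at hle
  linarith

lemma IsFace.unique (h : IsFace S g ρ e a b) (h' : IsFace S g ρ e' a' b') :
    e = e' ∧ a = a' ∧ b = b' := by
  obtain rfl : e = e' := le_antisymm (h.height_le h') (h'.height_le h)
  exact ⟨rfl, le_antisymm (h.mem_Icc a' h'.left).1 (h'.mem_Icc a h.left).1,
    le_antisymm (h'.mem_Icc b h.right).2 (h.mem_Icc b' h'.right).2⟩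

section RescaledReduction

variable {θ E : Kbar} {Q : (Residue S)[X]}

lemma coeff_C_mul_comp_C_mul_X {k : Type*} [CommSemiring k] (E θ : k) (P : k[X]) (m : ℕ) :
    (C E * P.comp (C θ * X)).coeff m = E * (P.coeff m * θ ^ m) := by
  rw [coeff_C_mul, comp_C_mul_X_coeff]

lemma v_rescale (hθ : S.v θ = (ρ : WithTop ℚ)) (hE : S.v E = ((-e : ℚ) : WithTop ℚ)) (x : Kbar)
    (m : ℕ) : S.v (E * (x * θ ^ m)) + ((e - m * ρ : ℚ) : WithTop ℚ) = S.v x := by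
  rw [S.v_mul, S.v_mul, Setup.v_pow_eq_coe hθ, hE, add_right_comm, add_comm (S.v x), ← add_assoc,
    ← WithTop.coe_add, ← WithTop.coe_add]
  convert zero_add (S.v x)
  norm_cast
  ring

lemma coeff_ne_zero_iff_of_reducesTo (hθ : S.v θ = (ρ : WithTop ℚ))
    (hE : S.v E = ((-e : ℚ) : WithTop ℚ))
    (hred : ReducesTo S (C E * (g.map (algebraMap K Kbar)).comp (C θ * X)) Q) (m : ℕ) :
    Q.coeff m ≠ 0 ↔ S.vK (g.coeff m) = ((e - m * ρ : ℚ) : WithTop ℚ) := by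
  have hnonneg := hred.v_coeff_nonneg m
  rw [← hred.red_coeff, Ne, red_eq_zero_iff hnonneg, not_lt, hnonneg.ge_iff_eq', Setup.vK,
    coeff_C_mul_comp_C_mul_X, coeff_map,
    ← v_rescale hθ hE (algebraMap K Kbar (g.coeff m)) m]
  induction S.v (E * (algebraMap K Kbar (g.coeff m) * θ ^ m)) with
  | top => rw [top_add]; exact iff_of_false WithTop.top_ne_zero WithTop.top_ne_coe
  | coe q => norm_cast; rw [add_eq_right]

lemma isFace_of_reducesTo (hθ : S.v θ = (ρ : WithTop ℚ)) (hE : S.v E = ((-e : ℚ) : WithTop ℚ))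
    (hred : ReducesTo S (C E * (g.map (algebraMap K Kbar)).comp (C θ * X)) Q) (hQ : Q ≠ 0) :
    IsFace S g ρ e Q.natTrailingDegree Q.natDegree := by
  have hcoeff := coeff_ne_zero_iff_of_reducesTo hθ hE hred
  refine ⟨fun m => ?_, (hcoeff _).mp (trailingCoeff_nonzero_iff_nonzero.mpr hQ),
    (hcoeff _).mp (leadingCoeff_ne_zero.mpr hQ), fun m hm => ?_⟩
  · have hnonneg := hred.v_coeff_nonneg m
    rw [coeff_C_mul_comp_C_mul_X, coeff_map] at hnonneg
    rw [Setup.vK, ← v_rescale hθ hE (algebraMap K Kbar (g.coeff m)) m]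
    exact le_add_of_nonneg_left hnonneg
  · have hm' := (hcoeff m).mpr hm
    exact ⟨natTrailingDegree_le_of_ne_zero hm', le_natDegree_of_ne_zero hm'⟩

end RescaledReduction

section Vertices

variable {s : ℕ} {i : Fin (s + 1) → ℕ} {c : Fin (s + 1) → ℚ}

namespace IsNPVertices

lemma width_pos (h : IsNPVertices S g s i c) (j : Fin s) :
    (0 : ℚ) < i j.succ - i j.castSucc := by
  rw [sub_pos, Nat.cast_lt]
  exact h.mono j.castSucc_lt_succ

lemma rise_eq (h : IsNPVertices S g s i c) (j : Fin s) :
    c j.succ - c j.castSucc = NPslope i c j * (i j.succ - i j.castSucc) :=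
  (div_mul_cancel₀ _ (h.width_pos j).ne').symm

lemma line_le (h : IsNPVertices S g s i c) (j : Fin s) {m : ℕ} {q : ℚ}
    (hq : S.vK (g.coeff m) = (q : WithTop ℚ)) :
    c j.castSucc + NPslope i c j * (m - i j.castSucc) ≤ q := by
  have hsup := h.support j m q hq
  rw [h.rise_eq j, mul_right_comm] at hsup
  linarith [le_of_mul_le_mul_right hsup (h.width_pos j)]

lemma left_le (h : IsNPVertices S g s i c) (j : Fin s) {m : ℕ}
    (hm : S.vK (g.coeff m) =
      ((c j.castSucc + NPslope i c j * (m - i j.castSucc) : ℚ) : WithTop ℚ)) :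
    i j.castSucc ≤ m := by
  by_contra! hlt
  rcases Fin.eq_zero_or_eq_succ j.castSucc with h0 | ⟨j', hj'⟩
  · rw [h0, h.first] at hlt
    rw [coeff_eq_zero_of_lt_natTrailingDegree hlt, Setup.vK, map_zero, S.v_zero] at hm
    exact WithTop.top_ne_coe hm
  · have hslope : NPslope i c j' < NPslope i c j :=
      h.slope_mono (Fin.castSucc_lt_castSucc_iff.mp (hj' ▸ j'.castSucc_lt_succ))
    have hline := h.line_le j' hm
    have hrise := h.rise_eq j'
    rw [← hj'] at hrise
    have hlt' : (m : ℚ) < i j.castSucc := by exact_mod_cast hlt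
    nlinarith

lemma le_right (h : IsNPVertices S g s i c) (j : Fin s) {m : ℕ}
    (hm : S.vK (g.coeff m) =
      ((c j.castSucc + NPslope i c j * (m - i j.castSucc) : ℚ) : WithTop ℚ)) :
    m ≤ i j.succ := by
  by_contra! hlt
  rcases Fin.eq_castSucc_or_eq_last j.succ with ⟨j', hj'⟩ | hlast
  · have hslope : NPslope i c j < NPslope i c j' :=
      h.slope_mono (Fin.succ_lt_succ_iff.mp (hj' ▸ j'.castSucc_lt_succ))
    have hline := h.line_le j' hm
    have hrise := h.rise_eq j
    rw [← hj'] at hline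
    have hlt' : (i j.succ : ℚ) < m := by exact_mod_cast hlt
    nlinarith
  · rw [hlast, h.last] at hlt
    rw [coeff_eq_zero_of_natDegree_lt hlt, Setup.vK, map_zero, S.v_zero] at hm
    exact WithTop.top_ne_coe hm

lemma isFace (h : IsNPVertices S g s i c) (j : Fin s) :
    IsFace S g (-NPslope i c j) (c j.castSucc - i j.castSucc * NPslope i c j)
      (i j.castSucc) (i j.succ) := by
  have hline (m : ℕ) : c j.castSucc - i j.castSucc * NPslope i c j - m * -NPslope i c j =
      c j.castSucc + NPslope i c j * (m - i j.castSucc) := by ring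
  constructor
  · intro m
    rw [hline]
    by_cases htop : S.vK (g.coeff m) = ⊤
    · exact htop ▸ le_top
    · obtain ⟨q, hq⟩ := WithTop.ne_top_iff_exists.mp htop
      rw [← hq, WithTop.coe_le_coe]
      exact h.line_le j hq.symm
  · rw [h.vert, hline, sub_self, mul_zero, add_zero]
  · rw [h.vert, hline, ← h.rise_eq j, add_sub_cancel]
  · intro m hm
    rw [hline] at hm
    exact ⟨h.left_le j hm, h.le_right j hm⟩

end IsNPVertices

lemma exists_isNPVertices_of_isFace (hg : g ≠ 0) {ρ : Fin s → ℚ} (hρ : StrictAnti ρ)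
    (hi : StrictMono i) (hfirst : i 0 = g.natTrailingDegree) (hlast : i (Fin.last s) = g.natDegree)
    (hface : ∀ j, ∃ e, IsFace S g (ρ j) e (i j.castSucc) (i j.succ)) :
    ∃ c, IsNPVertices S g s i c ∧ ∀ j, NPslope i c j = -ρ j := by
  choose e hface using hface
  have hvert (j : Fin (s + 1)) : ∃ q : ℚ, S.vK (g.coeff (i j)) = (q : WithTop ℚ) := by
    rcases Fin.eq_zero_or_eq_succ j with rfl | ⟨j', rfl⟩
    · apply Setup.exists_v_eq_coe
      rw [hfirst, _root_.map_ne_zero]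
      exact trailingCoeff_nonzero_iff_nonzero.mpr hg
    · exact ⟨_, (hface j').right⟩
  choose c hc using hvert
  have hleft (j : Fin s) : c j.castSucc = e j - i j.castSucc * ρ j := by
    rw [← WithTop.coe_inj, ← hc, (hface j).left]
  have hright (j : Fin s) : c j.succ = e j - i j.succ * ρ j := by
    rw [← WithTop.coe_inj, ← hc, (hface j).right]
  have hwidth (j : Fin s) : (0 : ℚ) < i j.succ - i j.castSucc := by
    rw [sub_pos, Nat.cast_lt]
    exact hi j.castSucc_lt_succ
  have hslope (j : Fin s) : NPslope i c j = -ρ j := by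
    rw [NPslope, div_eq_iff (hwidth j).ne', hleft, hright]
    ring
  refine ⟨c, ⟨hi, hfirst, hlast, hc, fun j j' hjj' => ?_, fun j m q hq => ?_⟩, hslope⟩
  · rw [hslope, hslope]
    exact neg_lt_neg (hρ hjj')
  · have hle := (hface j).le m
    rw [hq, WithTop.coe_le_coe] at hle
    rw [hleft, hright]
    nlinarith [mul_le_mul_of_nonneg_right hle (hwidth j).le]

end Vertices

end NewtonPolygon

section RootsAndFaces

variable {S : Setup K Kbar} {g : K[X]} {ι : Type*} {R : Finset ι} {β : ι → Kbar}
  {c θ : Kbar} {ρ : ℚ}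

lemma natDegree_eq_card_of_map_eq (hc : c ≠ 0)
    (hg : g.map (algebraMap K Kbar) = C c * ∏ i ∈ R, (X - C (β i))) : g.natDegree = R.card := by
  rw [← natDegree_map (algebraMap K Kbar), hg, natDegree_C_mul hc,
    natDegree_finsetProd_X_sub_C_eq_card]

lemma natTrailingDegree_eq_card_of_map_eq (hc : c ≠ 0)
    (hg : g.map (algebraMap K Kbar) = C c * ∏ i ∈ R, (X - C (β i))) :
    g.natTrailingDegree = (R.filter fun i => β i = 0).card := by
  rw [← rootMultiplicity_eq_natTrailingDegree',
    eq_rootMultiplicity_map (algebraMap K Kbar).injective, hg, map_zero,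
    rootMultiplicity_mul (mul_ne_zero (C_ne_zero.mpr hc) (monic_prod_X_sub_C β R).ne_zero),
    rootMultiplicity_C, zero_add, rootMultiplicity_prod_X_sub_C]

lemma exists_reducesTo_and_isFace (hc : c ≠ 0)
    (hg : g.map (algebraMap K Kbar) = C c * ∏ i ∈ R, (X - C (β i)))
    (hθ : S.v θ = (ρ : WithTop ℚ)) :
    ∃ (e : ℚ) (E : Kbar), S.v E = ((-e : ℚ) : WithTop ℚ) ∧
      ReducesTo S (C E * (g.map (algebraMap K Kbar)).comp (C θ * X))
        (∏ i ∈ R with (ρ : WithTop ℚ) ≤ S.v (β i), (X - C (red S (β i / θ)))) ∧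
      IsFace S g ρ e (R.filter fun i => (ρ : WithTop ℚ) < S.v (β i)).card
        (R.filter fun i => (ρ : WithTop ℚ) ≤ S.v (β i)).card := by
  have hθ0 : θ ≠ 0 := Setup.ne_zero_of_v_eq_coe hθ
  obtain ⟨E, hE0, hred⟩ := exists_reducesTo_prod (S := S) R β hc hθ0
  obtain ⟨q, hq⟩ := Setup.exists_v_eq_coe (S := S) hE0
  rw [← neg_neg q] at hq
  rw [← hg, hθ] at hred
  refine ⟨-q, E, hq, hred, ?_⟩
  have hface := isFace_of_reducesTo hθ hq hred (monic_prod_X_sub_C _ _).ne_zero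
  rw [natDegree_finsetProd_X_sub_C_eq_card, ← rootMultiplicity_eq_natTrailingDegree',
    rootMultiplicity_prod_X_sub_C, Finset.filter_filter] at hface
  convert hface using 3 with i
  rw [← hθ]
  exact ⟨fun h => ⟨h.le, (red_div_eq_zero_iff hθ0 h.le).mpr h⟩,
    fun h => (red_div_eq_zero_iff hθ0 h.1).mp h.2⟩

lemma exists_isFace (hc : c ≠ 0)
    (hg : g.map (algebraMap K Kbar) = C c * ∏ i ∈ R, (X - C (β i))) (ρ : ℚ) :
    ∃ e, IsFace S g ρ e (R.filter fun i => (ρ : WithTop ℚ) < S.v (β i)).card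
      (R.filter fun i => (ρ : WithTop ℚ) ≤ S.v (β i)).card := by
  obtain ⟨π, hπ⟩ := S.exists_uniformiser
  obtain ⟨θ, -, hθ⟩ := Setup.exists_pow_eq_zpow hπ ρ
  obtain ⟨e, -, -, -, hface⟩ := exists_reducesTo_and_isFace hc hg hθ
  exact ⟨e, hface⟩

section VertexIndex

variable {s : ℕ} {ρ : Fin s → ℚ}

/-- The abscissa of the `j`-th vertex of the Newton polygon of a polynomial with roots `β r`,
`r ∈ R`, whose finite valuations are `ρ 0 > ρ 1 > ⋯`: the number of roots whose valuation exceeds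
`ρ k` for all `k ≥ j`. -/
noncomputable def vertexIndex (S : Setup K Kbar) (R : Finset ι) (β : ι → Kbar) (ρ : Fin s → ℚ)
    (j : Fin (s + 1)) : ℕ :=
  (R.filter fun r => ∀ k : Fin s, j ≤ k.castSucc → (ρ k : WithTop ℚ) < S.v (β r)).card

lemma vertexIndex_castSucc (hρ : StrictAnti ρ) (j : Fin s) :
    vertexIndex S R β ρ j.castSucc =
      (R.filter fun r => (ρ j : WithTop ℚ) < S.v (β r)).card := by
  refine congrArg Finset.card (Finset.filter_congr fun r _ =>
    ⟨fun h => h j le_rfl, fun h k hjk => ?_⟩)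
  exact (WithTop.coe_le_coe.mpr (hρ.antitone (Fin.castSucc_le_castSucc_iff.mp hjk))).trans_lt h

lemma vertexIndex_last : vertexIndex S R β ρ (Fin.last s) = R.card :=
  congrArg Finset.card (Finset.filter_true_of_mem fun _ _ k hk =>
    absurd k.castSucc_lt_last (not_lt.mpr hk))

lemma vertexIndex_succ (hval : ∀ r ∈ R, β r ≠ 0 → ∃ j, S.v (β r) = (ρ j : WithTop ℚ))
    (hρ : StrictAnti ρ) (j : Fin s) :
    vertexIndex S R β ρ j.succ = (R.filter fun r => (ρ j : WithTop ℚ) ≤ S.v (β r)).card := by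
  refine congrArg Finset.card (Finset.filter_congr fun r hr => ⟨fun h => ?_, fun h k hjk => ?_⟩)
  · by_cases hr0 : β r = 0
    · rw [hr0, S.v_zero]
      exact le_top
    obtain ⟨k, hk⟩ := hval r hr hr0
    rw [hk, WithTop.coe_le_coe]
    refine hρ.antitone (not_lt.mp fun hjk => ?_)
    exact (h k (Fin.succ_le_castSucc_iff.mpr hjk)).ne hk.symm
  · exact (WithTop.coe_lt_coe.mpr (hρ (Fin.succ_le_castSucc_iff.mp hjk))).trans_le h

lemma vertexIndex_zero
    (hval : ∀ r ∈ R, β r ≠ 0 → ∃ j, S.v (β r) = (ρ j : WithTop ℚ)) :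
    vertexIndex S R β ρ 0 = (R.filter fun r => β r = 0).card := by
  refine congrArg Finset.card (Finset.filter_congr fun r hr => ⟨fun h => ?_, fun h k _ => ?_⟩)
  · by_contra hr0
    obtain ⟨k, hk⟩ := hval r hr hr0
    exact (h k (Fin.zero_le _)).ne hk.symm
  · rw [h, S.v_zero]
    exact WithTop.coe_lt_top _

lemma vertexIndex_strictMono
    (hval : ∀ r ∈ R, β r ≠ 0 → ∃ j, S.v (β r) = (ρ j : WithTop ℚ))
    (hρ : StrictAnti ρ)
    (hatt : ∀ j, ∃ r ∈ R, S.v (β r) = (ρ j : WithTop ℚ)) :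
    StrictMono (vertexIndex S R β ρ) := by
  refine Fin.strictMono_iff_lt_succ.mpr fun j => ?_
  rw [vertexIndex_castSucc hρ, vertexIndex_succ hval hρ]
  obtain ⟨r, hr, hrj⟩ := hatt j
  refine Finset.card_lt_card ((Finset.ssubset_iff_of_subset
    (Finset.monotone_filter_right _ fun _ _ => le_of_lt)).mpr ⟨r, ?_, ?_⟩)
  · exact Finset.mem_filter.mpr ⟨hr, hrj.ge⟩
  · exact fun hlt => (Finset.mem_filter.mp hlt).2.ne' hrj

lemma exists_isNPVertices_of_valuations
    (hval : ∀ r ∈ R, β r ≠ 0 → ∃ j, S.v (β r) = (ρ j : WithTop ℚ)) (hc : c ≠ 0)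
    (hg : g.map (algebraMap K Kbar) = C c * ∏ i ∈ R, (X - C (β i))) (hρ : StrictAnti ρ)
    (hatt : ∀ j, ∃ r ∈ R, S.v (β r) = (ρ j : WithTop ℚ)) :
    ∃ i c, IsNPVertices S g s i c ∧ ∀ j, NPslope i c j = -ρ j := by
  have hg0 : g ≠ 0 := by
    rintro rfl
    rw [Polynomial.map_zero] at hg
    exact mul_ne_zero (C_ne_zero.mpr hc) (monic_prod_X_sub_C β R).ne_zero hg.symm
  refine ⟨vertexIndex S R β ρ, exists_isNPVertices_of_isFace hg0 hρ
    (vertexIndex_strictMono hval hρ hatt) ?_ ?_ fun j => ?_⟩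
  · rw [vertexIndex_zero hval, natTrailingDegree_eq_card_of_map_eq hc hg]
  · rw [vertexIndex_last, natDegree_eq_card_of_map_eq hc hg]
  · rw [vertexIndex_castSucc hρ, vertexIndex_succ hval hρ]
    exact exists_isFace hc hg (ρ j)

end VertexIndex

lemma exists_isNPVertices_of_root (hc : c ≠ 0)
    (hg : g.map (algebraMap K Kbar) = C c * ∏ i ∈ R, (X - C (β i))) {r : ι} (hr : r ∈ R)
    (hρ : S.v (β r) = (ρ : WithTop ℚ)) :
    ∃ (s : ℕ) (i : Fin (s + 1) → ℕ) (c : Fin (s + 1) → ℚ) (j : Fin s),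
      IsNPVertices S g s i c ∧ NPslope i c j = -ρ := by
  let V : Finset ℚ := (R.image fun r => S.v (β r)).preimage _ WithTop.coe_injective.injOn
  have hV {q : ℚ} : q ∈ V ↔ ∃ r ∈ R, S.v (β r) = (q : WithTop ℚ) := by
    rw [Finset.mem_preimage, Finset.mem_image]
  let slope (j : Fin V.card) : ℚ := V.orderEmbOfFin rfl j.rev
  have hslope {q : ℚ} (hq : q ∈ V) : ∃ j, q = slope j := by
    obtain ⟨j, hj⟩ : q ∈ Set.range (V.orderEmbOfFin rfl) := by
      rwa [Finset.range_orderEmbOfFin]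
    exact ⟨j.rev, by rw [← hj]; exact congrArg _ j.rev_rev.symm⟩
  have hval (r : ι) (hr : r ∈ R) (hr0 : β r ≠ 0) :
      ∃ j, S.v (β r) = (slope j : WithTop ℚ) := by
    obtain ⟨q, hq⟩ := Setup.exists_v_eq_coe (S := S) hr0
    obtain ⟨j, rfl⟩ := hslope (hV.mpr ⟨r, hr, hq⟩)
    exact ⟨j, hq⟩
  obtain ⟨i, c, hNP, hc⟩ := exists_isNPVertices_of_valuations hval hc hg
    (fun j k hjk => (V.orderEmbOfFin rfl).strictMono (Fin.rev_lt_rev.mpr hjk))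
    (fun j => hV.mp (V.orderEmbOfFin_mem rfl j.rev))
  obtain ⟨j, rfl⟩ := hslope (hV.mpr ⟨r, hr, hρ⟩)
  exact ⟨_, i, c, j, hNP, hc j⟩

end RootsAndFaces

section EdgeReduction

variable {S : Setup K Kbar} {π : K} {g : K[X]} {ρ e : ℚ} {a b : ℕ} {q₁ : ℤ} {θ E : Kbar}
  {Q : (Residue S)[X]}

lemma den_dvd_of_mul_eq_intCast {k z : ℤ} (h : k * ρ = z) : (ρ.den : ℤ) ∣ k := by
  have hnum : k * ρ.num = z * ρ.den := by
    have hcast : (k : ℚ) * ρ.num = z * ρ.den := by rw [← Rat.mul_den_eq_num, ← mul_assoc, h]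
    exact_mod_cast hcast
  exact (Rat.isCoprime_num_den ρ).symm.dvd_of_dvd_mul_right (Dvd.intro_left z hnum.symm)

-- Values of `v` on `K` are integral, so `(m - a) ρ` is an integer for every point on the face.
lemma IsFace.exists_eq_den_mul_add (h : IsFace S g ρ e a b) {m : ℕ}
    (hm : S.vK (g.coeff m) = ((e - m * ρ : ℚ) : WithTop ℚ)) :
    ∃ j ≤ (b - a) / ρ.den, m = ρ.den * j + a := by
  have hint {l : ℕ} (hl : S.vK (g.coeff l) = ((e - l * ρ : ℚ) : WithTop ℚ)) :
      ∃ z : ℤ, (z : ℚ) = e - l * ρ := by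
    have hl0 : g.coeff l ≠ 0 := (_root_.map_ne_zero _).mp (Setup.ne_zero_of_v_eq_coe hl)
    obtain ⟨z, hz⟩ := S.v_base_int _ hl0
    exact ⟨z, WithTop.coe_injective (hz.symm.trans hl)⟩
  obtain ⟨z, hz⟩ := hint hm
  obtain ⟨z', hz'⟩ := hint h.left
  obtain ⟨ham, hmb⟩ := h.mem_Icc m hm
  obtain ⟨d, rfl⟩ := Nat.exists_eq_add_of_le ham
  have hdvd : (ρ.den : ℤ) ∣ d := by
    refine den_dvd_of_mul_eq_intCast (z := z' - z) ?_
    push_cast at hz ⊢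
    linarith
  obtain ⟨j, rfl⟩ := Int.natCast_dvd_natCast.mp hdvd
  refine ⟨j, ?_, add_comm _ _⟩
  rw [Nat.le_div_iff_mul_le ρ.den_pos, mul_comm]
  omega

lemma X_pow_mul_expand_redEdge (nρ : ℤ) (n : ℕ) :
    X ^ a * expand (Residue S) n (redEdge S π g a b q₁ nρ n) =
      ∑ j ∈ Finset.range ((b - a) / n + 1),
        C (red S (algebraMap K Kbar (g.coeff (n * j + a)) *
          (algebraMap K Kbar π) ^ (-(q₁ + (j : ℤ) * nρ)))) * X ^ (n * j + a) := by
  rw [redEdge, map_sum, Finset.mul_sum]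
  refine Finset.sum_congr rfl fun j _ => ?_
  rw [map_mul, map_pow, expand_C, expand_X, ← pow_mul]
  ring

lemma red_mul_red_coeff (hπ : S.vK π = ((1 : ℚ) : WithTop ℚ)) (hq : (q₁ : ℚ) = e - a * ρ)
    (hθπ : θ ^ ρ.den = algebraMap K Kbar π ^ ρ.num) (hθ : S.v θ = (ρ : WithTop ℚ))
    (hE : S.v E = ((-e : ℚ) : WithTop ℚ))
    (hred : ReducesTo S (C E * (g.map (algebraMap K Kbar)).comp (C θ * X)) Q) (j : ℕ) :
    red S (E * θ ^ a * algebraMap K Kbar π ^ q₁) *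
        red S (algebraMap K Kbar (g.coeff (ρ.den * j + a)) *
          (algebraMap K Kbar π) ^ (-(q₁ + (j : ℤ) * -ρ.num))) =
      Q.coeff (ρ.den * j + a) := by
  set ϖ := algebraMap K Kbar π
  have hϖ : ϖ ≠ 0 := Setup.ne_zero_of_v_eq_coe hπ
  have hu : S.v (E * θ ^ a * ϖ ^ q₁) = 0 := by
    rw [Setup.v_mul_eq_coe (Setup.v_mul_eq_coe hE (Setup.v_pow_eq_coe hθ a))
      (Setup.v_zpow_eq_coe hπ q₁), hq]
    norm_cast
    ring
  have hzpow : ϖ ^ q₁ * ϖ ^ (-(q₁ + (j : ℤ) * -ρ.num)) = θ ^ (ρ.den * j) := by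
    rw [← zpow_add₀ hϖ, pow_mul, hθπ, ← zpow_natCast, ← zpow_mul]
    congr 1
    ring
  have hscale : E * θ ^ a * ϖ ^ q₁ *
      (algebraMap K Kbar (g.coeff (ρ.den * j + a)) * ϖ ^ (-(q₁ + (j : ℤ) * -ρ.num))) =
      (C E * (g.map (algebraMap K Kbar)).comp (C θ * X)).coeff (ρ.den * j + a) := by
    rw [coeff_C_mul_comp_C_mul_X, coeff_map, pow_add, ← hzpow]
    ring
  have hint := hred.v_coeff_nonneg (ρ.den * j + a)
  rw [← hscale, S.v_mul, hu, zero_add] at hint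
  rw [← red_mul hu.ge hint, hscale, hred.red_coeff]

lemma C_mul_X_pow_mul_expand_redEdge (hπ : S.vK π = ((1 : ℚ) : WithTop ℚ))
    (h : IsFace S g ρ e a b) (hq : (q₁ : ℚ) = e - a * ρ)
    (hθπ : θ ^ ρ.den = algebraMap K Kbar π ^ ρ.num) (hθ : S.v θ = (ρ : WithTop ℚ))
    (hE : S.v E = ((-e : ℚ) : WithTop ℚ))
    (hred : ReducesTo S (C E * (g.map (algebraMap K Kbar)).comp (C θ * X)) Q) :
    C (red S (E * θ ^ a * algebraMap K Kbar π ^ q₁)) *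
      (X ^ a * expand (Residue S) ρ.den (redEdge S π g a b q₁ (-ρ.num) ρ.den)) = Q := by
  rw [X_pow_mul_expand_redEdge, Finset.mul_sum]
  ext m
  simp only [finsetSum_coeff, coeff_C_mul, coeff_X_pow, mul_ite, mul_one, mul_zero]
  by_cases hm : ∃ j ≤ (b - a) / ρ.den, m = ρ.den * j + a
  · obtain ⟨j, hj, rfl⟩ := hm
    rw [Finset.sum_eq_single_of_mem j (Finset.mem_range_succ_iff.mpr hj), if_pos rfl,
      red_mul_red_coeff hπ hq hθπ hθ hE hred]
    intro i _ hij
    refine if_neg fun heq => hij ?_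
    exact (Nat.eq_of_mul_eq_mul_left ρ.den_pos (Nat.add_right_cancel heq)).symm
  · have hQm : Q.coeff m = 0 := by
      by_contra hQ
      exact hm (h.exists_eq_den_mul_add ((coeff_ne_zero_iff_of_reducesTo hθ hE hred m).mp hQ))
    rw [hQm]
    refine Finset.sum_eq_zero fun j hj => if_neg fun heq => hm ⟨j, ?_, heq⟩
    exact Finset.mem_range_succ_iff.mp hj

end EdgeReduction

section Regularity

variable {S : Setup K Kbar} {π : K} {g : K[X]} {ι : Type*} {R : Finset ι} {β : ι → Kbar}
  {c θ : Kbar} {ρ : ℚ} {p : ℕ}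

lemma forall_card_red_div_eq_le_iff (hθ : S.v θ = (ρ : WithTop ℚ)) (N : ℕ) :
    (∀ b ≠ 0, (R.filter fun j => (ρ : WithTop ℚ) ≤ S.v (β j) ∧ red S (β j / θ) = b).card ≤ N) ↔
      ∀ i ∈ R, S.v (β i) = (ρ : WithTop ℚ) →
        (R.filter fun j => (ρ : WithTop ℚ) < S.v (β j - β i)).card ≤ N := by
  have hθ0 : θ ≠ 0 := Setup.ne_zero_of_v_eq_coe hθ
  have hfibre {i : ι} (hi : S.v (β i) = (ρ : WithTop ℚ)) :
      (R.filter fun j => (ρ : WithTop ℚ) ≤ S.v (β j) ∧ red S (β j / θ) = red S (β i / θ)) =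
        R.filter fun j => (ρ : WithTop ℚ) < S.v (β j - β i) := by
    refine Finset.filter_congr fun j _ => ⟨fun ⟨hle, heq⟩ => ?_, fun hlt => ?_⟩
    · rw [← hθ] at hle ⊢
      exact (red_div_eq_red_div_iff hθ0 hle (hθ.trans hi.symm).le).mp heq
    · have hle : (ρ : WithTop ℚ) ≤ S.v (β j) :=
        sub_add_cancel (β j) (β i) ▸ S.addVal.map_le_add hlt.le hi.ge
      rw [← hθ] at hle hlt
      exact ⟨hθ ▸ hle, (red_div_eq_red_div_iff hθ0 hle (hθ.trans hi.symm).le).mpr hlt⟩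
  constructor
  · intro h i _ hi
    rw [← hfibre hi]
    refine h _ fun h0 => ?_
    exact ((red_div_eq_zero_iff hθ0 (hθ.trans hi.symm).le).mp h0).ne (hθ.trans hi.symm)
  · intro h b hb
    rcases Finset.eq_empty_or_nonempty
      (R.filter fun j => (ρ : WithTop ℚ) ≤ S.v (β j) ∧ red S (β j / θ) = b) with h0 | ⟨i, hi⟩
    · rw [h0, Finset.card_empty]
      exact Nat.zero_le N
    obtain ⟨hiR, hle, rfl⟩ := Finset.mem_filter.mp hi
    rw [← hθ] at hle
    have hvi : S.v (β i) = (ρ : WithTop ℚ) := by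
      rw [← hθ]
      exact (hle.eq_of_not_lt fun hlt => hb ((red_div_eq_zero_iff hθ0 hle).mpr hlt)).symm
    exact hfibre hvi ▸ h i hiR hvi

lemma redEdge_separable_iff (hπ : S.vK π = ((1 : ℚ) : WithTop ℚ)) (hp : p.Prime)
    (hres : 0 < S.vK (p : K)) (hc : c ≠ 0)
    (hg : g.map (algebraMap K Kbar) = C c * ∏ i ∈ R, (X - C (β i))) {e : ℚ} {a b : ℕ}
    (h : IsFace S g ρ e a b) {q₁ : ℤ} (hq : (q₁ : ℚ) = e - a * ρ) :
    (redEdge S π g a b q₁ (-ρ.num) ρ.den).Separable ↔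
      ∀ i ∈ R, S.v (β i) = (ρ : WithTop ℚ) →
        (R.filter fun j => (ρ : WithTop ℚ) < S.v (β j - β i)).card ≤ ordProj[p] ρ.den := by
  have := Fact.mk hp
  have := Setup.charP_residue hp hres
  obtain ⟨θ, hθπ, hθ⟩ := Setup.exists_pow_eq_zpow hπ ρ
  obtain ⟨e', E, hE, hred, hface⟩ := exists_reducesTo_and_isFace hc hg hθ
  obtain ⟨rfl, -, -⟩ := h.unique hface
  have hprod := C_mul_X_pow_mul_expand_redEdge hπ h hq hθπ hθ hE hred
  have hcoeff := (coeff_ne_zero_iff_of_reducesTo hθ hE hred a).mpr h.left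
  rw [← hprod, coeff_C_mul, coeff_X_pow_mul', if_pos le_rfl, Nat.sub_self,
    coeff_expand ρ.den_pos, if_pos (dvd_zero _), Nat.zero_div] at hcoeff
  rw [separable_iff_rootMultiplicity_expand_le p ρ.den_nz (right_ne_zero_of_mul hcoeff),
    ← forall_card_red_div_eq_le_iff hθ]
  refine forall₂_congr fun b hb => ?_
  rw [← rootMultiplicity_C_mul_X_pow_mul (left_ne_zero_of_mul hcoeff) hb a, hprod,
    rootMultiplicity_prod_X_sub_C, Finset.filter_filter]

/-- The condition on the roots `β i`, `i ∈ R`, that governs NP-regularity: the open disc of radius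
`ρ` around a root of valuation `ρ` contains at most `max 1 |ρ|_p` roots, this number
being the `p`-part of the denominator of `ρ`. -/
def DiscBound (S : Setup K Kbar) (p : ℕ) (R : Finset ι) (β : ι → Kbar) : Prop :=
  ∀ i ∈ R, ∀ ρ : ℚ, S.v (β i) = (ρ : WithTop ℚ) →
    (R.filter fun j => (ρ : WithTop ℚ) < S.v (β j - β i)).card ≤ ordProj[p] ρ.den

theorem npRegular_iff_discBound (hπ : S.vK π = ((1 : ℚ) : WithTop ℚ)) (hp : p.Prime)
    (hres : 0 < S.vK (p : K)) (hc : c ≠ 0)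
    (hg : g.map (algebraMap K Kbar) = C c * ∏ i ∈ R, (X - C (β i))) :
    NPRegular S π g ↔ DiscBound S p R β := by
  constructor
  · intro hreg i hi ρ hρ
    obtain ⟨s, x, y, j, hNP, hslope⟩ := exists_isNPVertices_of_root hc hg hi hρ
    have hvert := hNP.vert j.castSucc
    obtain ⟨q₁, hq₁⟩ := S.v_base_int _ ((_root_.map_ne_zero _).mp (Setup.ne_zero_of_v_eq_coe hvert))
    have hq : (q₁ : ℚ) = y j.castSucc := WithTop.coe_injective (hq₁.symm.trans hvert)
    have hface := hNP.isFace j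
    have hsep := hreg s x y hNP j q₁ (-ρ.num) ρ.den hq (by rw [hslope, Rat.neg_den])
      (by rw [hslope, Int.cast_neg, mul_neg, Rat.den_mul_eq_num])
    rw [hslope, neg_neg] at hface
    exact (redEdge_separable_iff hπ hp hres hc hg hface (by rw [hq]; ring)).mp hsep i hi hρ
  · intro hbound s x y hNP j q₁ nρ n hq hn hnρ
    obtain ⟨ρ, hρ⟩ : ∃ ρ, NPslope x y j = -ρ := ⟨_, (neg_neg _).symm⟩
    have hface := hNP.isFace j
    rw [hρ, neg_neg] at hface
    rw [hρ, Rat.neg_den] at hn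
    obtain rfl : nρ = -ρ.num := by
      rw [hn, hρ, mul_neg, Rat.den_mul_eq_num] at hnρ
      exact_mod_cast hnρ
    rw [hn, redEdge_separable_iff hπ hp hres hc hg hface (by rw [hq]; ring)]
    exact fun i hi => hbound i hi ρ

end Regularity

section Clusters

variable {S : Setup K Kbar} {f : K[X]} {s : Finset Kbar} {z r : Kbar} {w w' : K} {ρ : ℚ} {p : ℕ}

lemma max_one_padicNorm (hp : p.Prime) (ρ : ℚ) :
    max 1 (padicNorm p ρ) = (ordProj[p] ρ.den : ℕ) := by
  have := Fact.mk hp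
  rcases eq_or_ne ρ 0 with rfl | hρ
  · simp
  have hval : padicValRat p ρ = padicValInt p ρ.num - (ρ.den.factorization p : ℤ) := by
    rw [Nat.factorization_def _ hp, padicValRat]
  rw [padicNorm.eq_zpow_of_nonzero hρ, hval]
  have hp1 : (1 : ℚ) ≤ p := by exact_mod_cast hp.one_le
  by_cases hden : p ∣ ρ.den
  · have hnum : ¬ (p : ℤ) ∣ ρ.num := fun h =>
      Nat.not_coprime_of_dvd_of_dvd hp.one_lt (Int.natCast_dvd.mp h) hden ρ.reduced
    rw [padicValInt.eq_zero_of_not_dvd hnum, Nat.cast_zero, zero_sub, neg_neg, zpow_natCast,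
      max_eq_right (one_le_pow₀ hp1), Nat.cast_pow]
  · rw [Nat.factorization_eq_zero_of_not_dvd hden, pow_zero, Nat.cast_zero, sub_zero, Nat.cast_one]
    exact max_eq_left (zpow_le_one_of_nonpos₀ hp1 (neg_nonpos.mpr (Int.natCast_nonneg _)))

lemma dmin_le_v (hr : r ∈ s) : dmin S s z ≤ S.v (r - z) :=
  Finset.inf_le (f := fun r => S.v (r - z)) hr

lemma le_depth_iff {q : WithTop ℚ} : q ≤ depth S s ↔ ∀ r ∈ s, ∀ r' ∈ s, q ≤ S.v (r - r') := by
  simp only [depth, Finset.le_inf_iff]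

lemma dmin_le_depth (S : Setup K Kbar) (s : Finset Kbar) (z : Kbar) :
    dmin S s z ≤ depth S s := by
  refine le_depth_iff.mpr fun r hr r' hr' => ?_
  rw [← sub_sub_sub_cancel_right r r' z]
  exact S.addVal.map_le_sub (dmin_le_v hr) (dmin_le_v hr')

lemma v_sub_eq_dmin_of_lt_depth (h : dmin S s z < depth S s) (hr : r ∈ s) :
    S.v (r - z) = dmin S s z := by
  obtain ⟨r₀, hr₀, hmin⟩ : ∃ r₀ ∈ s, dmin S s z = S.v (r₀ - z) :=
    Finset.exists_mem_eq_inf s ⟨r, hr⟩ fun r => S.v (r - z)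
  have hlt : S.v (r₀ - z) < S.v (r - r₀) :=
    (hmin ▸ h).trans_le (le_depth_iff.mp le_rfl r hr r₀ hr₀)
  rw [← sub_add_sub_cancel r r₀ z]
  exact (S.addVal.map_add_eq_of_lt_right hlt).trans hmin.symm

lemma exists_dminK_eq_intCast (hs : s.Nonempty) (h : dminK S s w < dminK S s w') :
    ∃ n : ℤ, dminK S s w = ((n : ℚ) : WithTop ℚ) := by
  obtain ⟨r, hr⟩ := hs
  have hv : S.v (r - algebraMap K Kbar w) = dminK S s w :=
    v_sub_eq_dmin_of_lt_depth (h.trans_le (dmin_le_depth S s _)) hr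
  have hw : S.v (algebraMap K Kbar (w' - w)) = dminK S s w := by
    have hlt : S.v (r - algebraMap K Kbar w) < S.v (r - algebraMap K Kbar w') :=
      hv.trans_lt (h.trans_le (dmin_le_v hr))
    rw [map_sub, ← sub_sub_sub_cancel_left _ _ r, ← hv]
    exact S.addVal.map_sub_eq_of_lt_left hlt
  have hne : w' - w ≠ 0 := by
    intro h0
    rw [h0, map_zero, S.v_zero] at hw
    exact not_top_lt (hw ▸ h)
  obtain ⟨n, hn⟩ := S.v_base_int _ hne
  exact ⟨n, hw.symm.trans hn⟩

section OpenDisc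

lemma lt_dmin_openDisc (S : Setup K Kbar) (R : Finset Kbar) (r : Kbar) (ρ : ℚ) :
    (ρ : WithTop ℚ) < dmin S (R.filter fun r' => (ρ : WithTop ℚ) < S.v (r' - r)) r :=
  (Finset.lt_inf_iff (WithTop.coe_lt_top ρ)).mpr fun _ hx => (Finset.mem_filter.mp hx).2

lemma mem_openDisc {R : Finset Kbar} (hr : r ∈ R) (S : Setup K Kbar) (ρ : ℚ) :
    r ∈ R.filter fun r' => (ρ : WithTop ℚ) < S.v (r' - r) := by
  rw [Finset.mem_filter, sub_self, S.v_zero]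
  exact ⟨hr, WithTop.coe_lt_top ρ⟩

lemma isCluster_openDisc (hr : r ∈ rootFinset f) (S : Setup K Kbar) (ρ : ℚ) :
    IsCluster S f ((rootFinset f).filter fun r' => (ρ : WithTop ℚ) < S.v (r' - r)) := by
  obtain ⟨δ, hρδ, hδ⟩ := WithTop.lt_iff_exists_coe_btwn.mp (lt_dmin_openDisc S (rootFinset f) r ρ)
  refine ⟨⟨r, mem_openDisc hr S ρ⟩, r, δ, Finset.filter_congr fun x hx => ⟨fun hlt => ?_, ?_⟩⟩
  · exact hδ.le.trans (dmin_le_v (Finset.mem_filter.mpr ⟨hx, hlt⟩))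
  · exact hρδ.trans_le

lemma dmin_openDisc {R : Finset Kbar} (hr : r ∈ R) (hρ : S.v (r - z) = (ρ : WithTop ℚ)) :
    dmin S (R.filter fun r' => (ρ : WithTop ℚ) < S.v (r' - r)) z = (ρ : WithTop ℚ) := by
  refine le_antisymm ((dmin_le_v (mem_openDisc hr S ρ)).trans_eq hρ) (Finset.le_inf fun x hx => ?_)
  rw [← sub_add_sub_cancel x r z]
  exact S.addVal.map_le_add (Finset.mem_filter.mp hx).2.le hρ.ge

end OpenDisc

lemma DiscBound.card_le {R : Finset Kbar} (h : DiscBound S p R fun r => r - z) (hsR : s ⊆ R)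
    (hs : s.Nonempty) (hρ : dmin S s z = (ρ : WithTop ℚ)) (hlt : (ρ : WithTop ℚ) < depth S s) :
    s.card ≤ ordProj[p] ρ.den := by
  obtain ⟨r, hr⟩ := hs
  refine le_trans (Finset.card_le_card fun x hx => ?_)
    (h r (hsR hr) ρ ((v_sub_eq_dmin_of_lt_depth (hρ ▸ hlt) hr).trans hρ))
  rw [Finset.mem_filter, sub_sub_sub_cancel_right]
  exact ⟨hsR hx, hlt.trans_le (le_depth_iff.mp le_rfl x hx r hr)⟩

lemma IsCluster.subset (hs : IsCluster S f s) : s ⊆ rootFinset f := by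
  obtain ⟨-, z, δ, rfl⟩ := hs
  exact Finset.filter_subset _ _

lemma DiscBound.isRationalCentre
    (h : DiscBound S p (rootFinset f) fun r => r - algebraMap K Kbar w) (hs : IsCluster S f s)
    (hcard : 1 < s.card) : IsRationalCentre S s w := by
  intro w'
  by_contra! hlt
  obtain ⟨n, hn⟩ := exists_dminK_eq_intCast hs.1 hlt
  have hle := h.card_le hs.subset hs.1 hn (hn ▸ hlt.trans_le (dmin_le_depth S s _))
  rw [Rat.den_intCast, Nat.factorization_one, Finsupp.zero_apply, pow_zero] at hle
  exact hcard.not_ge hle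

theorem discBound_iff_forall_isRationalCentre_and_almostRational (hp : p.Prime) :
    DiscBound S p (rootFinset f) (fun r => r - algebraMap K Kbar w) ↔
      (∀ s, IsCluster S f s → 1 < s.card → IsRationalCentre S s w) ∧ AlmostRational S f p := by
  constructor
  · refine fun h => ⟨fun s => h.isRationalCentre, fun s hs hcard w' ρ hw' hρ hnorm => ?_⟩
    have hle : (ρ : WithTop ℚ) ≤ depth S s := hρ ▸ dmin_le_depth S s _
    refine (hle.eq_of_not_lt fun hlt => ?_).symm
    have hρw : dminK S s w = (ρ : WithTop ℚ) :=
      (le_antisymm (hw' w) (h.isRationalCentre hs hcard w')).trans hρ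
    have hmax : max 1 (padicNorm p ρ) < s.card := max_lt (by exact_mod_cast hcard) hnorm
    rw [max_one_padicNorm hp, Nat.cast_lt] at hmax
    exact hmax.not_ge (h.card_le hs.subset hs.1 hρw hlt)
  · rintro ⟨hcentre, hrat⟩ r hr ρ hρ
    simp only [sub_sub_sub_cancel_right]
    by_contra! hlt
    have hcl := isCluster_openDisc hr S ρ
    set s := (rootFinset f).filter fun r' => (ρ : WithTop ℚ) < S.v (r' - r)
    rw [← Nat.cast_lt (α := ℚ), ← max_one_padicNorm hp, max_lt_iff, Nat.one_lt_cast] at hlt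
    obtain ⟨hcard, hnorm⟩ := hlt
    have hdepth := hrat s hcl hcard w ρ (hcentre s hcl hcard) (dmin_openDisc hr hρ) hnorm
    exact ((lt_dmin_openDisc S _ r ρ).trans_le (dmin_le_depth S s r)).ne' hdepth

end Clusters

section Translation

lemma map_eq_C_mul_prod_rootFinset [IsAlgClosed Kbar] {f : K[X]} (hsep : f.Separable) :
    f.map (algebraMap K Kbar) =
      C (algebraMap K Kbar f.leadingCoeff) * ∏ r ∈ rootFinset f, (X - C r) := by
  have hroots : (rootFinset f).val = (f.map (algebraMap K Kbar)).roots := by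
    rw [rootFinset, Multiset.toFinset_val, (nodup_roots hsep.map).dedup]
  conv_lhs => rw [(IsAlgClosed.splits (f.map (algebraMap K Kbar))).eq_prod_roots]
  rw [leadingCoeff_map, ← hroots]
  rfl

lemma map_comp_X_add_C [IsAlgClosed Kbar] {f : K[X]} (hsep : f.Separable) (w : K) :
    (f.comp (X + C w)).map (algebraMap K Kbar) = C (algebraMap K Kbar f.leadingCoeff) *
      ∏ r ∈ rootFinset f, (X - C (r - algebraMap K Kbar w)) := by
  simp only [map_comp, map_eq_C_mul_prod_rootFinset hsep, mul_comp, prod_comp, sub_comp, X_comp,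
    C_comp, Polynomial.map_add, map_X, map_C, C_sub, ← sub_add, sub_add_eq_add_sub]

theorem npRegular_translate_iff_general
    (S : Setup K Kbar) (π : K) (hπ : S.vK π = ((1 : ℚ) : WithTop ℚ))
    (p : ℕ) (hp : p.Prime) (hres : ((0 : ℚ) : WithTop ℚ) < S.vK (p : K))
    (f : K[X]) (hsep : f.Separable) (w : K) :
    NPRegular S π (f.comp (X + C w)) ↔
      (∀ s, IsCluster S f s → 1 < s.card → IsRationalCentre S s w) ∧ AlmostRational S f p := by
  have := S.algClosed
  have hlead : algebraMap K Kbar f.leadingCoeff ≠ 0 :=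
    (_root_.map_ne_zero _).mpr (leadingCoeff_ne_zero.mpr hsep.ne_zero)
  rw [npRegular_iff_discBound hπ hp hres hlead (map_comp_X_add_C hsep w),
    discBound_iff_forall_isRationalCentre_and_almostRational hp]

end Translation

/-- **NP-regularity after translation.** Let `w ∈ K` with `f(w) ≠ 0`. Then `f(x + w)` is
NP-regular iff every proper cluster `s ∈ Σ_f` has `w` as a rational centre and every proper
cluster `s ∈ Σ_f` with `|s| > |ρ_s|_p` satisfies `d_s = ρ_s`. -/
theorem npRegular_translate_iff
    (S : Setup K Kbar) (π : K) (hπ : S.vK π = ((1 : ℚ) : WithTop ℚ))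
    (p : ℕ) (hp : p.Prime) (hres : ((0 : ℚ) : WithTop ℚ) < S.vK (p : K))
    (f : K[X]) (hsep : f.Separable) (hdeg : 1 ≤ f.natDegree)
    (w : K) (hw : f.eval w ≠ 0) :
    NPRegular S π (f.comp (Polynomial.X + Polynomial.C w)) ↔
      ((∀ s : Finset Kbar, IsCluster S f s → 1 < s.card → IsRationalCentre S s w) ∧
       (∀ s : Finset Kbar, IsCluster S f s → 1 < s.card →
         ∀ (w' : K) (ρ : ℚ), IsRationalCentre S s w' →
           dminK S s w' = ((ρ : ℚ) : WithTop ℚ) →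
           padicNorm p ρ < (s.card : ℚ) → depth S s = ((ρ : ℚ) : WithTop ℚ))) :=
  npRegular_translate_iff_general S π hπ p hp hres f hsep w

end ClusterPicture
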